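/- The family of monomials c₁^{a₁}c₂^{a₂}r^{ε}d₁^{b₁}d₂^{b₂}w^{c}, with a₁, b₁, c ∈ ℕ₀, a₂, b₂ ∈ ℤ (negative exponents interpreted via the inverse generators) and ε ∈ {0,1}, is a ℂ-vector-space basis of ℬ; moreover, the monomials of this form with all exponents in ℕ₀ form a ℂ-vector-space basis of the subalgebra ℬ⁺ of ℬ generated by c₁, c₂, d₁, d₂, r, w. -/

import Mathlib

noncomputable section

/-- Generators of the algebra `ℬ`: `c₁, c₂, c₂⁻¹, d₁, d₂, d₂⁻¹, r, w`. -/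
inductive BGen : Type
  | c1 | c2 | c2i | d1 | d2 | d2i | r | w

abbrev FB : Type := FreeAlgebra ℂ BGen

def gB : BGen → FB := FreeAlgebra.ι ℂ

/-- The defining relations of the algebra `ℬ`. -/
inductive BRel (q : ℂ) : FB → FB → Prop
  | c2c2i : BRel q (gB .c2 * gB .c2i) 1
  | c2ic2 : BRel q (gB .c2i * gB .c2) 1
  | d2d2i : BRel q (gB .d2 * gB .d2i) 1
  | d2id2 : BRel q (gB .d2i * gB .d2) 1
  | c2c1 : BRel q (gB .c2 * gB .c1) (gB .c1 * gB .c2)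
  | d2d1 : BRel q (gB .d2 * gB .d1) (gB .d1 * gB .d2)
  | d2c2 : BRel q (gB .d2 * gB .c2) ((q⁻¹ ^ 4) • (gB .c2 * gB .d2))
  | d2c1 : BRel q (gB .d2 * gB .c1) ((q⁻¹ ^ 2) • (gB .c1 * gB .d2))
  | d1c2 : BRel q (gB .d1 * gB .c2) ((q⁻¹ ^ 2) • (gB .c2 * gB .d1))
  | d1c1 : BRel q (gB .d1 * gB .c1) (gB .c1 * gB .d1 + (q⁻¹ ^ 2 - 1) • gB .r)
  | d2r : BRel q (gB .d2 * gB .r) ((q⁻¹ ^ 2) • (gB .r * gB .d2))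
  | rc2 : BRel q (gB .r * gB .c2) ((q⁻¹ ^ 2) • (gB .c2 * gB .r))
  | d1r : BRel q (gB .d1 * gB .r)
      ((q⁻¹ ^ 2) • (gB .r * gB .d1) + ((1 - q⁻¹ ^ 2) * q⁻¹ ^ 2) • (gB .c1 * gB .d2))
  | rc1 : BRel q (gB .r * gB .c1)
      ((q⁻¹ ^ 2) • (gB .c1 * gB .r) + ((1 - q⁻¹ ^ 2) * q⁻¹ ^ 2) • (gB .c2 * gB .d1))
  | rr : BRel q (gB .r * gB .r)
      ((q⁻¹ ^ 4) • gB .w + (q⁻¹ ^ 4 + q⁻¹ ^ 6) • (gB .c2 * gB .d2)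
        - (q⁻¹ ^ 4) • (gB .c2 * gB .d1 * gB .d1)
        - (q⁻¹ ^ 4) • (gB .c1 * gB .c1 * gB .d2)
        + (q⁻¹ ^ 2) • (gB .c1 * gB .r * gB .d1))
  | wr : BRel q (gB .w * gB .r) (gB .r * gB .w)
  | wc1 : BRel q (gB .w * gB .c1) ((q⁻¹ ^ 2) • (gB .c1 * gB .w))
  | wc2 : BRel q (gB .w * gB .c2) ((q⁻¹ ^ 4) • (gB .c2 * gB .w))
  | wd1 : BRel q (gB .w * gB .d1) ((q ^ 2) • (gB .d1 * gB .w))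
  | wd2 : BRel q (gB .w * gB .d2) ((q ^ 4) • (gB .d2 * gB .w))

/-- The algebra `ℬ`. -/
abbrev AlgB (q : ℂ) : Type := RingQuot (BRel q)

def bc1 (q : ℂ) : AlgB q := RingQuot.mkAlgHom ℂ (BRel q) (gB .c1)
def bc2 (q : ℂ) : AlgB q := RingQuot.mkAlgHom ℂ (BRel q) (gB .c2)
def bc2i (q : ℂ) : AlgB q := RingQuot.mkAlgHom ℂ (BRel q) (gB .c2i)
def bd1 (q : ℂ) : AlgB q := RingQuot.mkAlgHom ℂ (BRel q) (gB .d1)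
def bd2 (q : ℂ) : AlgB q := RingQuot.mkAlgHom ℂ (BRel q) (gB .d2)
def bd2i (q : ℂ) : AlgB q := RingQuot.mkAlgHom ℂ (BRel q) (gB .d2i)
def br (q : ℂ) : AlgB q := RingQuot.mkAlgHom ℂ (BRel q) (gB .r)
def bw (q : ℂ) : AlgB q := RingQuot.mkAlgHom ℂ (BRel q) (gB .w)

/-- Integer powers of an element `x` with designated inverse `xi`:
negative exponents are interpreted via the inverse generator. -/
def zp {M : Type*} [Monoid M] (x xi : M) : ℤ → M
  | Int.ofNat n => x ^ n
  | Int.negSucc n => xi ^ (n + 1)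

/-- The PBW family `c₁^{a₁}c₂^{a₂}r^{ε}d₁^{b₁}d₂^{b₂}w^{c}` of `ℬ`, indexed by
`a₁, b₁, c ∈ ℕ`, `a₂, b₂ ∈ ℤ`, `ε ∈ {0,1}`. -/
def pbwB (q : ℂ) : ℕ × ℤ × Fin 2 × ℕ × ℤ × ℕ → AlgB q :=
  fun x => bc1 q ^ x.1 * zp (bc2 q) (bc2i q) x.2.1 * br q ^ (x.2.2.1 : ℕ) *
    bd1 q ^ x.2.2.2.1 * zp (bd2 q) (bd2i q) x.2.2.2.2.1 * bw q ^ x.2.2.2.2.2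

/-- The PBW family of the subalgebra `ℬ⁺`, with all exponents in `ℕ₀`. -/
def pbwBplus (q : ℂ) : ℕ × ℕ × Fin 2 × ℕ × ℕ × ℕ → AlgB q :=
  fun x => bc1 q ^ x.1 * bc2 q ^ x.2.1 * br q ^ (x.2.2.1 : ℕ) *
    bd1 q ^ x.2.2.2.1 * bd2 q ^ x.2.2.2.2.1 * bw q ^ x.2.2.2.2.2

open Polynomial in
def thM {A : Type*} [CommRing A] (q p c : A) : Matrix (Fin 2) (Fin 2) A[X] :=
  !![C p * X, C ((p - p ^ 3) * c); C (p - q), C q * X]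

open Polynomial in
def th {A : Type*} [CommRing A] (q p c : A) (i j : Fin 2) : A[X] →ₗ[A] A[X] where
  toFun f := aeval (thM q p c) f i j
  map_add' f g := by simp
  map_smul' a f := by simp

open Polynomial in
theorem th_one {A : Type*} [CommRing A] (q p c : A) (i j : Fin 2) :
    th q p c i j 1 = if i = j then 1 else 0 := by
  simp [th, Matrix.one_apply]

open Polynomial in
theorem th_X {A : Type*} [CommRing A] (q p c : A) (i j : Fin 2) (f : A[X]) :
    th q p c i j (X * f) = thM q p c i 0 * th q p c 0 j f + thM q p c i 1 * th q p c 1 j f := by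
  simp [th, Matrix.mul_apply]

open Polynomial in
theorem th_C {A : Type*} [CommRing A] (q p c : A) (i j : Fin 2) (a : A) (f : A[X]) :
    th q p c i j (C a * f) = C a * th q p c i j f := by
  rw [← smul_eq_C_mul, map_smul, smul_eq_C_mul]

theorem thM00 {A : Type*} [CommRing A] (q p c : A) :
    thM q p c 0 0 = Polynomial.C p * Polynomial.X := rfl
theorem thM01 {A : Type*} [CommRing A] (q p c : A) :
    thM q p c 0 1 = Polynomial.C ((p - p ^ 3) * c) := rfl
theorem thM10 {A : Type*} [CommRing A] (q p c : A) :
    thM q p c 1 0 = Polynomial.C (p - q) := rfl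
theorem thM11 {A : Type*} [CommRing A] (q p c : A) :
    thM q p c 1 1 = Polynomial.C q * Polynomial.X := rfl

open Polynomial in
/-- `i = 0` is the operator of `r`, `i = 1` that of `d₁`. -/
def RD {A : Type*} [CommRing A] (q p c d w y : A) (i : Fin 2) :
    (A[X] × A[X]) →ₗ[A] (A[X] × A[X]) where
  toFun v := (th q p c i 1 v.1 * C y
      + th q p c i 0 v.2 * (C (p ^ 3 * w + (p ^ 3 + p ^ 5) * (c * d) - p ^ 3 * c * y ^ 2)
          - C (p ^ 3 * d) * X ^ 2)
      + th q p c i 1 v.2 * (C ((p - p ^ 3) * d) * X),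
    th q p c i 0 v.1 + th q p c i 0 v.2 * (C (p * y) * X) + th q p c i 1 v.2 * C (p * y))
  map_add' u v := by
    ext1 <;> simp only [Prod.fst_add, Prod.snd_add, map_add] <;> ring
  map_smul' a v := by
    ext1 <;> simp only [Prod.smul_fst, Prod.smul_snd, RingHom.id_apply, smul_eq_C_mul, th_C] <;> ring

section
open Polynomial
variable {A : Type*} [CommRing A] (q p c d w y : A)

theorem RX (v : A[X] × A[X]) : RD q p c d w y 0 ((X : A[X]) • v) =
    (C p * X) • RD q p c d w y 0 v + C ((p - p ^ 3) * c) • RD q p c d w y 1 v := by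
  ext1 <;> simp only [RD, LinearMap.coe_mk, AddHom.coe_mk, Prod.fst_add, Prod.snd_add,
    Prod.smul_fst, Prod.smul_snd, smul_eq_mul, th_X, thM00, thM01] <;> ring

theorem DX (v : A[X] × A[X]) : RD q p c d w y 1 ((X : A[X]) • v) =
    C (p - q) • RD q p c d w y 0 v + (C q * X) • RD q p c d w y 1 v := by
  ext1 <;> simp only [RD, LinearMap.coe_mk, AddHom.coe_mk, Prod.fst_add, Prod.snd_add,
    Prod.smul_fst, Prod.smul_snd, smul_eq_mul, th_X, thM10, thM11] <;> ring

theorem RDC (i : Fin 2) (a : A) (v : A[X] × A[X]) : RD q p c d w y i ((C a : A[X]) • v) =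
    (C a : A[X]) • RD q p c d w y i v := by
  have h : ∀ u : A[X] × A[X], (C a : A[X]) • u = a • u := fun u => by
    ext1 <;> simp [smul_eq_C_mul]
  rw [h, h, map_smul]

theorem th_C1 (i j : Fin 2) (a : A) : th q p c i j (C a) = C a * th q p c i j 1 := by
  rw [← th_C, mul_one]

theorem Re0 (a : A) : RD q p c d w y 0 (C a, 0) = (0, C a) := by
  ext1 <;> simp only [RD, LinearMap.coe_mk, AddHom.coe_mk, th_C1, th_one, map_zero] <;> simp

theorem De0 (a : A) : RD q p c d w y 1 (C a, 0) = (C (a * y), 0) := by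
  ext1 <;> simp only [RD, LinearMap.coe_mk, AddHom.coe_mk, th_C1, th_one, map_zero] <;> simp

theorem Re1 : RD q p c d w y 0 (0, 1) =
    (C (p ^ 3 * w + (p ^ 3 + p ^ 5) * (c * d) - p ^ 3 * c * y ^ 2)
          - C (p ^ 3 * d) * X ^ 2, C (p * y) * X) := by
  ext1 <;> simp only [RD, LinearMap.coe_mk, AddHom.coe_mk, th_one, map_zero, if_pos,
    zero_mul, zero_add, one_mul] <;> simp

theorem De1 : RD q p c d w y 1 (0, 1) = (C ((p - p ^ 3) * d) * X, C (p * y)) := by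
  ext1 <;> simp only [RD, LinearMap.coe_mk, AddHom.coe_mk, th_one, map_zero, if_pos,
    zero_mul, zero_add, one_mul] <;> simp

theorem ext_of_comm (T : (A[X] × A[X]) →+ (A[X] × A[X]))
    (hX : ∀ v, T ((X : A[X]) • v) = (X : A[X]) • T v)
    (hC : ∀ a v, T ((C a : A[X]) • v) = (C a : A[X]) • T v)
    (h0 : T (1, 0) = 0) (h1 : T (0, 1) = 0) (v) : T v = 0 := by
  have key : ∀ (f : A[X]) v, T v = 0 → T (f • v) = 0 := by
    intro f
    induction f using Polynomial.induction_on' with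
    | add f g hf hg => intro v hv; rw [add_smul, map_add, hf v hv, hg v hv, add_zero]
    | monomial n a =>
      intro v hv
      rw [← C_mul_X_pow_eq_monomial, mul_smul, hC]
      have : T ((X ^ n : A[X]) • v) = 0 := by
        induction n with
        | zero => simpa using hv
        | succ n ih => rw [pow_succ', mul_smul, hX, ih, smul_zero]
      rw [this, smul_zero]
  have : v = v.1 • ((1, 0) : A[X] × A[X]) + v.2 • ((0, 1) : A[X] × A[X]) := by
    ext1 <;> simp
  rw [this, map_add, key _ _ h0, key _ _ h1, add_zero]

theorem absDR {V : Type*} [AddCommGroup V] [Module A[X] V] (R D : V →+ V) (h : (C q : A[X]) * C p = 1)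
    (hRC : ∀ a v, R ((C a : A[X]) • v) = (C a : A[X]) • R v)
    (hDC : ∀ a v, D ((C a : A[X]) • v) = (C a : A[X]) • D v)
    (hRX : ∀ v, R ((X : A[X]) • v) = (C p * X : A[X]) • R v + (C ((p - p ^ 3) * c) : A[X]) • D v)
    (hDX : ∀ v, D ((X : A[X]) • v) = (C (p - q) : A[X]) • R v + (C q * X : A[X]) • D v) (v : V) :
    D (R ((X : A[X]) • v)) - ((C p : A[X]) • R (D ((X : A[X]) • v))
        + (C ((p - p ^ 3) * d) * X : A[X]) • (X : A[X]) • v) =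
      (X : A[X]) • (D (R v) - ((C p : A[X]) • R (D v) + (C ((p - p ^ 3) * d) * X : A[X]) • v)) := by
  simp only [hRX, hDX, map_add, mul_smul, hRC, hDC]
  simp only [map_mul, map_sub, map_pow]
  match_scalars <;> grind

theorem absRR {V : Type*} [AddCommGroup V] [Module A[X] V] (R D : V →+ V) (h : (C q : A[X]) * C p = 1)
    (hRC : ∀ a v, R ((C a : A[X]) • v) = (C a : A[X]) • R v)
    (hDC : ∀ a v, D ((C a : A[X]) • v) = (C a : A[X]) • D v)
    (hRX : ∀ v, R ((X : A[X]) • v) = (C p * X : A[X]) • R v + (C ((p - p ^ 3) * c) : A[X]) • D v)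
    (hDX : ∀ v, D ((X : A[X]) • v) = (C (p - q) : A[X]) • R v + (C q * X : A[X]) • D v) (v : V) :
    R (R ((X : A[X]) • v)) - ((C (p ^ 3 * w + (p ^ 3 + p ^ 5) * (c * d)) : A[X]) • (X : A[X]) • v
      - (C (p ^ 3 * c) : A[X]) • D (D ((X : A[X]) • v)) - (C (p ^ 3 * d) * X ^ 2 : A[X]) • (X : A[X]) • v
      + (C p * X : A[X]) • R (D ((X : A[X]) • v))) =
    (X : A[X]) • (R (R v) - ((C (p ^ 3 * w + (p ^ 3 + p ^ 5) * (c * d)) : A[X]) • v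
      - (C (p ^ 3 * c) : A[X]) • D (D v) - (C (p ^ 3 * d) * X ^ 2 : A[X]) • v
      + (C p * X : A[X]) • R (D v))) := by
  simp only [hRX, hDX, map_add, mul_smul, hRC, hDC]
  simp only [map_mul, map_sub, map_pow, map_add]
  match_scalars <;> grind

theorem absE {V : Type*} [AddCommGroup V] [Module A[X] V] (R D : V →+ V) (h : (C q : A[X]) * C p = 1)
    (hRC : ∀ a v, R ((C a : A[X]) • v) = (C a : A[X]) • R v)
    (hDC : ∀ a v, D ((C a : A[X]) • v) = (C a : A[X]) • D v)
    (hRX : ∀ v, R ((X : A[X]) • v) = (C p * X : A[X]) • R v + (C ((p - p ^ 3) * c) : A[X]) • D v)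
    (hDX : ∀ v, D ((X : A[X]) • v) = (C (p - q) : A[X]) • R v + (C q * X : A[X]) • D v) (e f : V)
    (hRe : R e = f) (hDe : D e = (C y : A[X]) • e)
    (hRf : R f = (C (p ^ 3 * w + (p ^ 3 + p ^ 5) * (c * d) - p ^ 3 * c * y ^ 2) : A[X]) • e
      - (C (p ^ 3 * d) * (X * X) : A[X]) • e + (C (p * y) * X : A[X]) • f)
    (hDf : D f = (C ((p - p ^ 3) * d) * X : A[X]) • e + (C (p * y) : A[X]) • f) :
    D (R f) - ((C p : A[X]) • R (D f) + (C ((p - p ^ 3) * d) * X : A[X]) • f) = 0 ∧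
    D (R e) - ((C p : A[X]) • R (D e) + (C ((p - p ^ 3) * d) * X : A[X]) • e) = 0 ∧
    R (R f) - ((C (p ^ 3 * w + (p ^ 3 + p ^ 5) * (c * d)) : A[X]) • f
      - (C (p ^ 3 * c) : A[X]) • D (D f) - (C (p ^ 3 * d) * X ^ 2 : A[X]) • f
      + (C p * X : A[X]) • R (D f)) = 0 ∧
    R (R e) - ((C (p ^ 3 * w + (p ^ 3 + p ^ 5) * (c * d)) : A[X]) • e
      - (C (p ^ 3 * c) : A[X]) • D (D e) - (C (p ^ 3 * d) * X ^ 2 : A[X]) • e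
      + (C p * X : A[X]) • R (D e)) = 0 := by
  simp only [hRX, hDX, map_add, map_sub R, map_sub D, mul_smul, hRC, hDC, hRe, hDe, hRf, hDf]
  simp only [map_mul, map_sub, map_pow, map_add]
  refine ⟨?_, ?_, ?_, ?_⟩ <;> match_scalars <;> grind

theorem relBoth (h : q * p = 1) :
    (∀ v : A[X] × A[X],
    RD q p c d w y 1 (RD q p c d w y 0 v) = C p • RD q p c d w y 0 (RD q p c d w y 1 v)
      + (C ((p - p ^ 3) * d) * X) • v) ∧
    (∀ v : A[X] × A[X], RD q p c d w y 0 (RD q p c d w y 0 v) =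
      C (p ^ 3 * w + (p ^ 3 + p ^ 5) * (c * d)) • v
      - C (p ^ 3 * c) • RD q p c d w y 1 (RD q p c d w y 1 v) - (C (p ^ 3 * d) * X ^ 2) • v
      + (C p * X) • RD q p c d w y 0 (RD q p c d w y 1 v)) := by
  have hC : (C q : A[X]) * C p = 1 := by rw [← C_mul, h, C_1]
  have hRC := RDC q p c d w y 0
  have hDC := RDC q p c d w y 1
  have hRX := RX q p c d w y
  have hDX := DX q p c d w y
  have hRe : RD q p c d w y 0 (1, 0) = (0, 1) := by simpa using Re0 q p c d w y 1
  have hDe : RD q p c d w y 1 (1, 0) = (C y : A[X]) • (1, 0) := by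
    rw [← C_1, De0]; simp
  have hRf := Re1 q p c d w y
  have hDf := De1 q p c d w y
  generalize RD q p c d w y 0 = R at *
  generalize RD q p c d w y 1 = D at *
  obtain ⟨e1, e2, e3, e4⟩ := absE q p c d w y R.toAddMonoidHom D.toAddMonoidHom hC hRC hDC hRX hDX
    (1, 0) (0, 1) hRe hDe (by refine hRf.trans ?_; ext1 <;> simp [pow_two])
    (by refine hDf.trans ?_; ext1 <;> simp)
  constructor
  · intro v
    rw [← sub_eq_zero]
    exact ext_of_comm { toFun := fun v => D (R v) -
      ((C p : A[X]) • R (D v) + (C ((p - p ^ 3) * d) * X : A[X]) • v)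
                        map_zero' := by simp
                        map_add' := by intro u v; simp only [map_add]; module }
      (absDR q p c d R.toAddMonoidHom D.toAddMonoidHom hC hRC hDC hRX hDX)
      (fun a v => by
        simp only [AddMonoidHom.coe_mk, ZeroHom.coe_mk, hRC, hDC]
        module) e2 e1 v
  · intro v
    rw [← sub_eq_zero]
    exact ext_of_comm { toFun := fun v => R (R v) -
      ((C (p ^ 3 * w + (p ^ 3 + p ^ 5) * (c * d)) : A[X]) • v
      - (C (p ^ 3 * c) : A[X]) • D (D v) - (C (p ^ 3 * d) * X ^ 2 : A[X]) • v
      + (C p * X : A[X]) • R (D v))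
                        map_zero' := by simp
                        map_add' := by intro u v; simp only [map_add]; module }
      (absRR q p c d w R.toAddMonoidHom D.toAddMonoidHom hC hRC hDC hRX hDX)
      (fun a v => by
        simp only [AddMonoidHom.coe_mk, ZeroHom.coe_mk, hRC, hDC]
        module) e4 e3 v
end

/-- graded twist of an operator -/
def opT (q : ℂ) {V : Type*} [AddCommGroup V] [Module ℂ V] (i j : ℤ) :
    Module.End ℂ V →ₗ[ℂ] Module.End ℂ (ℤ → V) where
  toFun L :=
    { toFun := fun v n => q ^ (i * n) • L (v (n - j))
      map_add' := fun u v => by ext n; simp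
      map_smul' := fun a v => by ext n; simp [smul_comm a] }
  map_add' L L' := by ext v n; simp
  map_smul' a L := by ext v n; simp [smul_comm a]

theorem opT_mul {q : ℂ} (hq : q ≠ 0) {V : Type*} [AddCommGroup V] [Module ℂ V] (i j i' j' : ℤ)
    (L L' : Module.End ℂ V) :
    opT q i j L * opT q i' j' L' = q ^ (-(j * i')) • opT q (i + i') (j + j') (L * L') := by
  ext v n
  simp only [opT, LinearMap.coe_mk, AddHom.coe_mk, Module.End.mul_apply, map_smul,
    LinearMap.smul_apply, Pi.smul_apply, smul_smul]
  rw [← zpow_add₀ hq, ← zpow_add₀ hq, sub_sub]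
  congr 2
  ring

theorem opT_one (q : ℂ) {V : Type*} [AddCommGroup V] [Module ℂ V] :
    opT q 0 0 (1 : Module.End ℂ V) = 1 := by
  ext v n; simp [opT]

def genOp (q : ℂ) {V : Type*} [AddCommGroup V] [Module ℂ V]
    (X c ci d di w R D : Module.End ℂ V) : BGen → Module.End ℂ (ℤ → V)
  | .c1 => opT q 1 0 X
  | .c2 => opT q 2 0 c
  | .c2i => opT q (-2) 0 ci
  | .d1 => opT q 0 1 D
  | .d2 => opT q 0 2 d
  | .d2i => opT q 0 (-2) di
  | .r => opT q 1 1 R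
  | .w => opT q 2 2 w

theorem genOp_rel {q : ℂ} (hq : q ≠ 0) {V : Type*} [AddCommGroup V] [Module ℂ V]
    (X c ci d di w R D : Module.End ℂ V)
    (h1 : c * ci = 1) (h2 : ci * c = 1) (h3 : d * di = 1) (h4 : di * d = 1)
    (cX : c * X = X * c) (dX : d * X = X * d) (wX : w * X = X * w)
    (Rc : R * c = c * R) (dR : d * R = R * d) (wR : w * R = R * w)
    (Dc : D * c = c * D) (dD : d * D = D * d) (wD : w * D = D * w)
    (dc : d * c = c * d) (wc : w * c = c * w) (wd : w * d = d * w)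
    (DX : D * X = q • (X * D) + (q⁻¹ - q) • R)
    (RX : R * X = q⁻¹ • (X * R) + (q⁻¹ - q⁻¹ ^ 3) • (c * D))
    (DR : D * R = q⁻¹ • (R * D) + (q⁻¹ - q⁻¹ ^ 3) • (X * d))
    (RR : R * R = q⁻¹ ^ 3 • w + (q⁻¹ ^ 3 + q⁻¹ ^ 5) • (c * d) - q⁻¹ ^ 3 • (c * D * D)
      - q⁻¹ ^ 3 • (X * X * d) + q⁻¹ • (X * R * D)) (x y : FB) (h : BRel q x y) :
    FreeAlgebra.lift ℂ (genOp q X c ci d di w R D) x =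
      FreeAlgebra.lift ℂ (genOp q X c ci d di w R D) y := by
  cases h <;>
  simp only [gB, map_mul, map_add, map_sub, map_smul, map_one, FreeAlgebra.lift_ι_apply, genOp,
    opT_mul hq, smul_mul_assoc, h1, h2, h3, h4, cX, dX, wX, Rc, dR, wR, Dc, dD, wD, dc, wc, wd, DX, RX, DR, RR] <;>
  norm_num [opT_one, zpow_neg] <;> 
  norm_cast <;> match_scalars <;> (field_simp; try ring)

def repB {q : ℂ} (hq : q ≠ 0) {V : Type*} [AddCommGroup V] [Module ℂ V]
    (X c ci d di w R D : Module.End ℂ V)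
    (h : ∀ x y : FB, BRel q x y → FreeAlgebra.lift ℂ (genOp q X c ci d di w R D) x =
      FreeAlgebra.lift ℂ (genOp q X c ci d di w R D) y) :
    AlgB q →ₐ[ℂ] Module.End ℂ (ℤ → V) :=
  RingQuot.liftAlgHom ℂ ⟨FreeAlgebra.lift ℂ (genOp q X c ci d di w R D), fun {x y} => h x y⟩

theorem repB_gen {q : ℂ} (hq : q ≠ 0) {V : Type*} [AddCommGroup V] [Module ℂ V]
    (X c ci d di w R D : Module.End ℂ V) (h) (g : BGen) :
    repB hq X c ci d di w R D h (RingQuot.mkAlgHom ℂ (BRel q) (gB g)) =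
      genOp q X c ci d di w R D g := by
  rw [repB, RingQuot.liftAlgHom_mkAlgHom_apply, gB, FreeAlgebra.lift_ι_apply]

def GoodT (q : ℂ) {V : Type*} [AddCommGroup V] [Module ℂ V]
    (E : Module.End ℂ (ℤ → V)) (L : Module.End ℂ V) : Prop :=
  ∃ s : ℂ, s ≠ 0 ∧ ∃ i j : ℤ, E = s • opT q i j L

theorem GoodT.mul {q : ℂ} (hq : q ≠ 0) {V : Type*} [AddCommGroup V] [Module ℂ V]
    {E E' : Module.End ℂ (ℤ → V)} {L L' : Module.End ℂ V} (h : GoodT q E L) (h' : GoodT q E' L') :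
    GoodT q (E * E') (L * L') := by
  obtain ⟨s, hs, i, j, rfl⟩ := h
  obtain ⟨s', hs', i', j', rfl⟩ := h'
  refine ⟨s * s' * q ^ (-(j * i')), mul_ne_zero (mul_ne_zero hs hs') (zpow_ne_zero _ hq), i + i', j + j', ?_⟩
  rw [smul_mul_smul_comm, opT_mul hq, smul_smul]

theorem GoodT.pow {q : ℂ} (hq : q ≠ 0) {V : Type*} [AddCommGroup V] [Module ℂ V]
    {E : Module.End ℂ (ℤ → V)} {L : Module.End ℂ V} (h : GoodT q E L) (n : ℕ) :
    GoodT q (E ^ n) (L ^ n) := by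
  induction n with
  | zero => exact ⟨1, one_ne_zero, 0, 0, by rw [pow_zero, pow_zero, opT_one, one_smul]⟩
  | succ n ih => rw [pow_succ, pow_succ]; exact ih.mul hq h

theorem GoodT.zp {q : ℂ} (hq : q ≠ 0) {V : Type*} [AddCommGroup V] [Module ℂ V]
    {E E' : Module.End ℂ (ℤ → V)} {L L' : Module.End ℂ V} (h : GoodT q E L) (h' : GoodT q E' L')
    (n : ℤ) : GoodT q (zp E E' n) (zp L L' n) := by
  cases n with
  | ofNat n => exact h.pow hq n
  | negSucc n => exact h'.pow hq _

theorem map_zp {M N : Type*} [Monoid M] [Monoid N] (f : M →* N) (x y : M) (n : ℤ) :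
    f (zp x y n) = zp (f x) (f y) n := by
  cases n <;> simp [zp]

theorem opT_good (q : ℂ) {V : Type*} [AddCommGroup V] [Module ℂ V] (i j : ℤ) (L : Module.End ℂ V) :
    GoodT q (opT q i j L) L := ⟨1, one_ne_zero, i, j, (one_smul _ _).symm⟩

theorem repB_good {q : ℂ} (hq : q ≠ 0) {V : Type*} [AddCommGroup V] [Module ℂ V]
    (X c ci d di w R D : Module.End ℂ V) (h) (x : ℕ × ℤ × Fin 2 × ℕ × ℤ × ℕ) :
    GoodT q (repB hq X c ci d di w R D h (pbwB q x)) (X ^ x.1 * zp c ci x.2.1 * R ^ (x.2.2.1 : ℕ) *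
      D ^ x.2.2.2.1 * zp d di x.2.2.2.2.1 * w ^ x.2.2.2.2.2) := by
  have hz : ∀ a b n, repB hq X c ci d di w R D h (zp a b n) =
    zp (repB hq X c ci d di w R D h a) (repB hq X c ci d di w R D h b) n := fun a b n =>
      map_zp ((repB hq X c ci d di w R D h : AlgB q →* Module.End ℂ (ℤ → V))) a b n
  simp only [pbwB, map_mul, map_pow, hz, bc1, bc2, bc2i, bd1, bd2, bd2i, br, bw, repB_gen, genOp]
  refine (((((GoodT.pow hq (opT_good ..) _).mul hq (GoodT.zp hq (opT_good ..) (opT_good ..) _)).mul hq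
    (GoodT.pow hq (opT_good ..) _)).mul hq (GoodT.pow hq (opT_good ..) _)).mul hq
    (GoodT.zp hq (opT_good ..) (opT_good ..) _)).mul hq (GoodT.pow hq (opT_good ..) _)

theorem li_of_rep {q : ℂ} (hq : q ≠ 0) {V : Type*} [AddCommGroup V] [Module ℂ V]
    (X c ci d di w R D : Module.End ℂ V) (h : ∀ x y : FB, BRel q x y → FreeAlgebra.lift ℂ (genOp q X c ci d di w R D) x =
      FreeAlgebra.lift ℂ (genOp q X c ci d di w R D) y)
    (v0 : V) (f : ℕ × ℤ × Fin 2 × ℕ × ℤ × ℕ → Module.Dual ℂ V)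
    (hf : ∀ y x, f y ((X ^ x.1 * zp c ci x.2.1 * R ^ (x.2.2.1 : ℕ) *
      D ^ x.2.2.2.1 * zp d di x.2.2.2.2.1 * w ^ x.2.2.2.2.2) v0) = if y = x then 1 else 0) :
    LinearIndependent ℂ (pbwB q) := by
  choose s hs i j he using repB_good hq X c ci d di w R D h
  have key : ∀ y x, f y (repB hq X c ci d di w R D h (pbwB q x) (fun _ => v0) 0) =
      if y = x then s x else 0 := by
    intro y x
    rw [he, LinearMap.smul_apply, Pi.smul_apply, map_smul]
    simp only [opT, LinearMap.coe_mk, AddHom.coe_mk, mul_zero, zpow_zero, one_smul, hf]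
    split_ifs <;> simp
  let Φ : AlgB q →ₗ[ℂ] V :=
    { toFun := fun b => repB hq X c ci d di w R D h b (fun _ => v0) 0
      map_add' := fun a b => by simp
      map_smul' := fun a b => by simp }
  refine LinearIndependent.of_pairwise_dual_eq_zero_one _ (fun y => (s y)⁻¹ • (f y).comp Φ) ?_ ?_
  · intro y x hyx
    have : f y (Φ (pbwB q x)) = 0 := (key y x).trans (if_neg hyx)
    simp [this]
  · intro y
    have : f y (Φ (pbwB q y)) = s y := (key y y).trans (if_pos rfl)
    simp [this, hs]

section
open Polynomial
variable {A : Type*} [CommRing A] [Algebra ℂ A]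

def mf (f : A[X]) : Module.End ℂ (A[X] × A[X]) := Algebra.lsmul ℂ ℂ (A[X] × A[X]) f

theorem mf_apply (f : A[X]) (v : A[X] × A[X]) : mf f v = f • v := rfl
theorem mf_mul (f g : A[X]) : mf f * mf g = mf (f * g) := (map_mul _ _ _).symm
theorem mf_pow (f : A[X]) (n : ℕ) : mf f ^ n = mf (f ^ n) := (map_pow _ _ _).symm
theorem mf_one : mf (1 : A[X]) = 1 := map_one _

def RDm (q : ℂ) (c d w y : A) (i : Fin 2) : Module.End ℂ (A[X] × A[X]) :=
  (RD (algebraMap ℂ A q) (algebraMap ℂ A q⁻¹) c d w y i).restrictScalars ℂ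

theorem RDm_apply (q : ℂ) (c d w y : A) (i : Fin 2) (v) : RDm q c d w y i v =
  RD (algebraMap ℂ A q) (algebraMap ℂ A q⁻¹) c d w y i v := rfl

theorem RDm_comm (q : ℂ) (c d w y : A) (i : Fin 2) (a : A) :
    RDm q c d w y i * mf (C a) = mf (C a) * RDm q c d w y i := by
  refine LinearMap.ext fun v => ?_
  rw [Module.End.mul_apply, Module.End.mul_apply, mf_apply, mf_apply, RDm_apply, RDm_apply, RDC]

theorem cc_smul (a : ℂ) (v : A[X] × A[X]) : a • v = (C (algebraMap ℂ A a)) • v := by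
  have : C (algebraMap ℂ A a) = algebraMap ℂ (A[X]) a := rfl
  rw [this, algebraMap_smul]

theorem DXm (q : ℂ) (c d w y : A) : RDm q c d w y 1 * mf X =
    q • (mf X * RDm q c d w y 1) + (q⁻¹ - q) • RDm q c d w y 0 := by
  refine LinearMap.ext fun v => ?_
  simp only [Module.End.mul_apply, mf_apply, RDm_apply, LinearMap.add_apply,
    LinearMap.smul_apply, DX, cc_smul, map_sub]
  module

theorem RXm (q : ℂ) (c d w y : A) : RDm q c d w y 0 * mf X =
    q⁻¹ • (mf X * RDm q c d w y 0) + (q⁻¹ - q⁻¹ ^ 3) • (mf (C c) * RDm q c d w y 1) := by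
  refine LinearMap.ext fun v => ?_
  simp only [Module.End.mul_apply, mf_apply, RDm_apply, LinearMap.add_apply,
    LinearMap.smul_apply, RX, cc_smul, map_sub, map_pow, map_mul]
  module

theorem DRm (q : ℂ) (hq : q ≠ 0) (c d w y : A) : RDm q c d w y 1 * RDm q c d w y 0 =
    q⁻¹ • (RDm q c d w y 0 * RDm q c d w y 1) + (q⁻¹ - q⁻¹ ^ 3) • (mf X * mf (C d)) := by
  have hqp : algebraMap ℂ A q * algebraMap ℂ A q⁻¹ = 1 := by
    rw [← map_mul, mul_inv_cancel₀ hq, map_one]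
  refine LinearMap.ext fun v => ?_
  simp only [Module.End.mul_apply, mf_apply, RDm_apply, LinearMap.add_apply,
    LinearMap.smul_apply, cc_smul]
  rw [(relBoth _ _ c d w y hqp).1]
  simp only [map_sub, map_pow, map_mul]
  module

theorem RRm (q : ℂ) (hq : q ≠ 0) (c d w y : A) : RDm q c d w y 0 * RDm q c d w y 0 =
    q⁻¹ ^ 3 • mf (C w) + (q⁻¹ ^ 3 + q⁻¹ ^ 5) • (mf (C c) * mf (C d))
      - q⁻¹ ^ 3 • (mf (C c) * RDm q c d w y 1 * RDm q c d w y 1)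
      - q⁻¹ ^ 3 • (mf X * mf X * mf (C d)) + q⁻¹ • (mf X * RDm q c d w y 0 * RDm q c d w y 1) := by
  have hqp : algebraMap ℂ A q * algebraMap ℂ A q⁻¹ = 1 := by
    rw [← map_mul, mul_inv_cancel₀ hq, map_one]
  refine LinearMap.ext fun v => ?_
  simp only [Module.End.mul_apply, mf_apply, RDm_apply, LinearMap.add_apply, LinearMap.sub_apply,
    LinearMap.smul_apply, cc_smul]
  rw [(relBoth _ _ c d w y hqp).2]
  simp only [map_add, map_pow, map_mul]
  module

theorem pbw_li_of {q : ℂ} (hq : q ≠ 0) (c ci d di w y : A) (hc : c * ci = 1) (hd : d * di = 1)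
    (f : ℕ × ℤ × Fin 2 × ℕ × ℤ × ℕ → Module.Dual ℂ (A[X] × A[X]))
    (hf : ∀ y' x, f y' ((mf X ^ x.1 * zp (mf (C c)) (mf (C ci)) x.2.1 * RDm q c d w y 0 ^ (x.2.2.1 : ℕ) *
      RDm q c d w y 1 ^ x.2.2.2.1 * zp (mf (C d)) (mf (C di)) x.2.2.2.2.1 * mf (C w) ^ x.2.2.2.2.2 :
        Module.End ℂ (A[X] × A[X])) ((1, 0) : A[X] × A[X])) = if y' = x then 1 else 0) :
    LinearIndependent ℂ (pbwB q) := by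
  have hrel := genOp_rel hq (mf X) (mf (C c)) (mf (C ci)) (mf (C d)) (mf (C di)) (mf (C w))
    (RDm q c d w y 0) (RDm q c d w y 1)
    (by rw [mf_mul, ← map_mul, hc, map_one, mf_one])
    (by rw [mf_mul, ← map_mul, mul_comm, hc, map_one, mf_one])
    (by rw [mf_mul, ← map_mul, hd, map_one, mf_one])
    (by rw [mf_mul, ← map_mul, mul_comm, hd, map_one, mf_one])
    (by rw [mf_mul, mf_mul, mul_comm]) (by rw [mf_mul, mf_mul, mul_comm])
    (by rw [mf_mul, mf_mul, mul_comm])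
    (RDm_comm ..) (RDm_comm ..).symm (RDm_comm ..).symm
    (RDm_comm ..) (RDm_comm ..).symm (RDm_comm ..).symm
    (by rw [mf_mul, mf_mul, mul_comm]) (by rw [mf_mul, mf_mul, mul_comm])
    (by rw [mf_mul, mf_mul, mul_comm])
    (DXm q c d w y) (RXm q c d w y) (DRm q hq c d w y) (RRm q hq c d w y)
  exact li_of_rep hq _ _ _ _ _ _ _ _ hrel (1, 0) f hf

end

abbrev LA : Type := AddMonoidAlgebra ℂ (ℤ × ℤ × ℕ × ℕ)
abbrev sg (g : ℤ × ℤ × ℕ × ℕ) : LA := AddMonoidAlgebra.single g 1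

theorem sg_mul (g h) : sg g * sg h = sg (g + h) := by
  simp [sg, AddMonoidAlgebra.single_mul_single]

theorem sg_pow (g) (n : ℕ) : sg g ^ n = sg (n • g) := by
  simp [sg, AddMonoidAlgebra.single_pow]

abbrev LV : Type := Polynomial LA × Polynomial LA

abbrev RDl (q : ℂ) (i : Fin 2) : Module.End ℂ LV :=
  RDm q (sg (1, 0, 0, 0)) (sg (0, 1, 0, 0)) (sg (0, 0, 0, 1)) (sg (0, 0, 1, 0)) i

theorem zp_mf (g : ℤ × ℤ × ℕ × ℕ) (g' : ℤ × ℤ × ℕ × ℕ) (n : ℤ) :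
    zp (mf (Polynomial.C (sg g))) (mf (Polynomial.C (sg g'))) n =
      mf (Polynomial.C (sg (zp (Multiplicative.ofAdd g) (Multiplicative.ofAdd g') n).toAdd)) := by
  cases n <;> simp only [zp, mf_pow, ← map_pow, sg_pow] <;> rfl

theorem Dm_pow (q : ℂ) (g : ℤ × ℤ × ℕ × ℕ) (n : ℕ) :
    (RDl q 1 ^ n) (Polynomial.C (sg g), 0) = (Polynomial.C (sg (g + n • (0, 0, 1, 0))), 0) := by
  induction n with
  | zero => simp
  | succ n ih =>
    rw [pow_succ', Module.End.mul_apply, ih, RDl, RDm_apply, De0, sg_mul, succ_nsmul, add_assoc]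

theorem Rm_pow (q : ℂ) (g : ℤ × ℤ × ℕ × ℕ) (e : Fin 2) :
    (RDl q 0 ^ (e : ℕ)) (Polynomial.C (sg g), 0) =
      if e = 0 then (Polynomial.C (sg g), 0) else (0, Polynomial.C (sg g)) := by
  fin_cases e
  · simp
  · simp only [Fin.mk_one, Fin.val_one, pow_one]
    rw [RDl, RDm_apply, Re0]; rfl

def coefD (x : ℕ × ℤ × Fin 2 × ℕ × ℤ × ℕ) : Module.Dual ℂ LV where
  toFun v := ((if x.2.2.1 = 0 then v.1 else v.2).coeff x.1).coeff
    (x.2.1, x.2.2.2.2.1, x.2.2.2.1, x.2.2.2.2.2)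
  map_add' u v := by split_ifs <;> simp
  map_smul' a v := by split_ifs <;> simp

theorem pbw_li (q : ℂ) (hq : q ≠ 0) : LinearIndependent ℂ (pbwB q) := by
  refine pbw_li_of hq (sg (1, 0, 0, 0)) (sg (-1, 0, 0, 0)) (sg (0, 1, 0, 0)) (sg (0, -1, 0, 0))
    (sg (0, 0, 0, 1)) (sg (0, 0, 1, 0)) ?_ ?_ coefD ?_
  · rw [sg_mul]; rfl
  · rw [sg_mul]; rfl
  rintro ⟨a', b', e', m', n', k'⟩ ⟨a, b, e, m, n, k⟩
  have z1 : ∀ n : ℤ, (zp (Multiplicative.ofAdd ((1, 0, 0, 0) : ℤ × ℤ × ℕ × ℕ))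
      (Multiplicative.ofAdd (-1, 0, 0, 0)) n).toAdd = (n, 0, 0, 0) := by
    intro n
    cases n <;> simp [zp, Int.negSucc_eq]
  have z2 : ∀ n : ℤ, (zp (Multiplicative.ofAdd ((0, 1, 0, 0) : ℤ × ℤ × ℕ × ℕ))
      (Multiplicative.ofAdd (0, -1, 0, 0)) n).toAdd = (0, n, 0, 0) := by
    intro n
    cases n <;> simp [zp, Int.negSucc_eq]
  have key : ((mf Polynomial.X ^ a * zp (mf (Polynomial.C (sg (1, 0, 0, 0))))
    (mf (Polynomial.C (sg (-1, 0, 0, 0)))) b * RDl q 0 ^ (e : ℕ) * RDl q 1 ^ m *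
    zp (mf (Polynomial.C (sg (0, 1, 0, 0)))) (mf (Polynomial.C (sg (0, -1, 0, 0)))) n *
      mf (Polynomial.C (sg (0, 0, 0, 1))) ^ k : Module.End ℂ LV) (1, 0)) =
      if e = 0 then (Polynomial.monomial a (sg (b, n, m, k)), 0)
        else (0, Polynomial.monomial a (sg (b, n, m, k))) := by
    rw [zp_mf, zp_mf, z1, z2, mf_pow, mf_pow, ← map_pow, sg_pow]
    simp only [Module.End.mul_apply]
    rw [mf_apply (Polynomial.C (sg (k • _))), mf_apply (Polynomial.C (sg (0, n, 0, 0)))]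
    have e1 : (Polynomial.C (sg (0, n, 0, 0)) • Polynomial.C (sg (k • (0, 0, 0, 1))) • ((1, 0) : LV)) =
        (Polynomial.C (sg (0, n, 0, k)), 0) := by
      rw [smul_smul, ← map_mul, sg_mul]
      ext1 <;> simp
    rw [e1, Dm_pow, Rm_pow]
    split_ifs
    · rw [mf_apply, mf_apply, smul_smul, ← Polynomial.C_mul_X_pow_eq_monomial]
      have : sg (b, n, m, k) = sg (b, 0, 0, 0) * sg ((0, n, 0, k) + m • (0, 0, 1, 0)) := by
        rw [sg_mul]; simp
      rw [this, map_mul]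
      ext1
      · simp only [Prod.smul_mk, smul_eq_mul]; ring
      · simp
    · rw [mf_apply, mf_apply, smul_smul, ← Polynomial.C_mul_X_pow_eq_monomial]
      have : sg (b, n, m, k) = sg (b, 0, 0, 0) * sg ((0, n, 0, k) + m • (0, 0, 1, 0)) := by
        rw [sg_mul]; simp
      rw [this, map_mul]
      ext1
      · simp
      · simp only [Prod.smul_mk, smul_eq_mul]; ring
  refine (congrArg _ key).trans ?_
  simp only [coefD, LinearMap.coe_mk, AddHom.coe_mk]
  have hs : ((Polynomial.monomial a (sg (b, n, m, k))).coeff a').coeff (b', n', m', k') =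
      if a = a' ∧ b = b' ∧ n = n' ∧ m = m' ∧ k = k' then 1 else 0 := by
    rw [Polynomial.coeff_monomial]
    by_cases ha : a = a' <;> simp [ha, Finsupp.single_apply]
  by_cases he : e = 0 <;> by_cases he' : e' = 0
  · rw [if_pos he, if_pos he', hs]
    congr 1
    simp only [Prod.mk.injEq, eq_iff_iff, he, he', true_and]
    grind
  · rw [if_pos he, if_neg he', if_neg (by simp only [Prod.mk.injEq]; grind)]; simp
  · rw [if_neg he, if_pos he', if_neg (by simp only [Prod.mk.injEq]; grind)]; simp
  · have : e = e' := by omega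
    rw [if_neg he, if_neg he', hs]
    congr 1
    simp only [Prod.mk.injEq, eq_iff_iff, this, true_and]
    grind

theorem adj_le {B : Type*} [Ring B] [Algebra ℂ B] (G : Set B) (S : Submodule ℂ B) (h1 : (1 : B) ∈ S)
    (hG : ∀ g ∈ G, ∀ s ∈ S, g * s ∈ S) : Subalgebra.toSubmodule (Algebra.adjoin ℂ G) ≤ S := by
  intro x hx
  have : ∀ s ∈ S, x * s ∈ S := by
    refine Algebra.adjoin_induction (p := fun x _ => ∀ s ∈ S, x * s ∈ S) hG ?_ ?_ ?_ hx
    · intro r s hs; rw [← Algebra.smul_def]; exact S.smul_mem r hs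
    · intro x y _ _ hx hy s hs; rw [add_mul]; exact S.add_mem (hx s hs) (hy s hs)
    · intro x y _ _ hx hy s hs; rw [mul_assoc]; exact hx _ (hy s hs)
  simpa using this 1 h1

/-- q-commutation -/
def QC {B : Type*} [Ring B] [Algebra ℂ B] (x y : B) : Prop := ∃ s : ℂ, s ≠ 0 ∧ x * y = s • (y * x)

section
variable {B : Type*} [Ring B] [Algebra ℂ B]

theorem QC.of_comm {x y : B} (h : x * y = y * x) : QC x y := ⟨1, one_ne_zero, by rw [h, one_smul]⟩

theorem QC.mul {x y z : B} (h : QC x y) (h' : QC x z) : QC x (y * z) := by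
  obtain ⟨s, hs, h⟩ := h
  obtain ⟨t, ht, h'⟩ := h'
  refine ⟨s * t, mul_ne_zero hs ht, ?_⟩
  rw [← mul_assoc, h, smul_mul_assoc, mul_assoc, h', mul_smul_comm, smul_smul, mul_assoc]

theorem QC.pow {x y : B} (h : QC x y) (n : ℕ) : QC x (y ^ n) := by
  induction n with
  | zero => exact .of_comm (by simp)
  | succ n ih => rw [pow_succ]; exact ih.mul h

theorem QC.symm {x y : B} (h : QC x y) : QC y x := by
  obtain ⟨s, hs, h⟩ := h
  exact ⟨s⁻¹, inv_ne_zero hs, by rw [h, smul_smul, inv_mul_cancel₀ hs, one_smul]⟩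

theorem QC.inv {x y yi : B} (h : QC x y) (h1 : y * yi = 1) (h2 : yi * y = 1) : QC x yi := by
  obtain ⟨s, hs, h⟩ := h.symm
  refine ⟨s, hs, ?_⟩
  calc x * yi = yi * (y * x) * yi := by rw [← mul_assoc yi, h2, one_mul]
    _ = s • (yi * x) := by rw [h, mul_smul_comm, smul_mul_assoc, mul_assoc, mul_assoc, h1, mul_one]

theorem QC.zp {x y yi : B} (h : QC x y) (h1 : y * yi = 1) (h2 : yi * y = 1) (n : ℤ) :
    QC x (zp y yi n) := by
  cases n with
  | ofNat n => exact h.pow n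
  | negSucc n => exact (h.inv h1 h2).pow _

theorem comm_inv {x y yi : B} (h : x * y = y * x) (h1 : y * yi = 1) (h2 : yi * y = 1) :
    x * yi = yi * x := by
  calc x * yi = yi * (y * x) * yi := by rw [← mul_assoc yi, h2, one_mul]
    _ = (yi * x) := by rw [← h, mul_assoc, mul_assoc, h1, mul_one]

theorem comm_zp {x y yi : B} (h : x * y = y * x) (h1 : y * yi = 1) (h2 : yi * y = 1) (n : ℤ) :
    x * zp y yi n = zp y yi n * x := by
  cases n with
  | ofNat n => exact (Commute.pow_right (show Commute x y from h) n)
  | negSucc n => exact (Commute.pow_right (show Commute x yi from comm_inv h h1 h2) (n + 1))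

theorem zp_mul_left {y yi : B} (h1 : y * yi = 1) (n : ℤ) : y * zp y yi n = zp y yi (n + 1) := by
  cases n with
  | ofNat n => exact (pow_succ' y n).symm
  | negSucc n =>
    cases n with
    | zero => simp [zp, h1]
    | succ n =>
      have : Int.negSucc (n + 1) + 1 = Int.negSucc n := by omega
      rw [this]
      change y * yi ^ (n + 1 + 1) = yi ^ (n + 1)
      rw [pow_succ', ← mul_assoc, h1, one_mul]

theorem zpi_mul_left {y yi : B} (h1 : y * yi = 1) (h2 : yi * y = 1) (n : ℤ) :
    yi * zp y yi n = zp y yi (n - 1) := by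
  have := zp_mul_left h1 (n - 1)
  rw [sub_add_cancel] at this
  rw [← this, ← mul_assoc, h2, one_mul]

/-- span of the ordered monomials -/
def monSpan (c1 r d1 w : B) (U Z : Set B) : Submodule ℂ B :=
  Submodule.span ℂ {x | ∃ a : ℕ, ∃ u ∈ U, ∃ e : Fin 2, ∃ b : ℕ, ∃ z ∈ Z, ∃ k : ℕ,
    x = c1 ^ a * u * r ^ (e : ℕ) * d1 ^ b * z * w ^ k}

variable {c1 c2 r d1 d2 w : B} {U Z : Set B}

theorem monSpan_mem (a : ℕ) {u : B} (hu : u ∈ U) (e : Fin 2) (b : ℕ) {z : B} (hz : z ∈ Z) (k : ℕ) :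
    c1 ^ a * u * r ^ (e : ℕ) * d1 ^ b * z * w ^ k ∈ monSpan c1 r d1 w U Z :=
  Submodule.subset_span ⟨a, u, hu, e, b, z, hz, k, rfl⟩

theorem monSpan_closed (x : B) (h : ∀ (a : ℕ), ∀ u ∈ U, ∀ (e : Fin 2) (b : ℕ), ∀ z ∈ Z, ∀ (k : ℕ),
    x * (c1 ^ a * u * r ^ (e : ℕ) * d1 ^ b * z * w ^ k) ∈ monSpan c1 r d1 w U Z) :
    ∀ s ∈ monSpan c1 r d1 w U Z, x * s ∈ monSpan c1 r d1 w U Z := by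
  intro s hs
  refine Submodule.span_induction ?_ ?_ ?_ ?_ hs
  · rintro _ ⟨a, u, hu, e, b, z, hz, k, rfl⟩
    exact h a u hu e b z hz k
  · rw [mul_zero]; exact Submodule.zero_mem _
  · intro s t _ _ h1 h2; rw [mul_add]; exact Submodule.add_mem _ h1 h2
  · intro c s _ h1; rw [mul_smul_comm]; exact Submodule.smul_mem _ _ h1

theorem closed_c1 : ∀ s ∈ monSpan c1 r d1 w U Z, c1 * s ∈ monSpan c1 r d1 w U Z := by
  refine monSpan_closed _ fun a u hu e b z hz k => ?_
  have := monSpan_mem (c1 := c1) (r := r) (d1 := d1) (w := w) (a + 1) hu e b hz k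
  rw [pow_succ'] at this
  simpa only [mul_assoc] using this

theorem closed_c2 (hc : c2 * c1 = c1 * c2) (hU : ∀ u ∈ U, c2 * u ∈ U) :
    ∀ s ∈ monSpan c1 r d1 w U Z, c2 * s ∈ monSpan c1 r d1 w U Z := by
  refine monSpan_closed _ fun a u hu e b z hz k => ?_
  have := monSpan_mem (c1 := c1) (r := r) (d1 := d1) (w := w) a (hU u hu) e b hz k
  have h2 : c2 * c1 ^ a = c1 ^ a * c2 := Commute.pow_right (show Commute c2 c1 from hc) a
  rw [← mul_assoc, ← h2] at this
  simpa only [mul_assoc] using this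

theorem closed_d2 (h1 : QC d2 c1) (hU : ∀ u ∈ U, QC d2 u) (hr : QC d2 r) (hd : QC d2 d1)
    (hZ : ∀ z ∈ Z, d2 * z ∈ Z) :
    ∀ s ∈ monSpan c1 r d1 w U Z, d2 * s ∈ monSpan c1 r d1 w U Z := by
  refine monSpan_closed _ fun a u hu e b z hz k => ?_
  obtain ⟨s, -, hs⟩ := (((h1.pow a).mul (hU u hu)).mul (hr.pow (e : ℕ))).mul (hd.pow b)
  rw [← mul_assoc, ← mul_assoc, hs]
  have := monSpan_mem (c1 := c1) (r := r) (d1 := d1) (w := w) a hu e b (hZ z hz) k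
  rw [smul_mul_assoc, smul_mul_assoc]
  refine Submodule.smul_mem _ _ ?_
  simpa only [mul_assoc] using this

theorem closed_w (h1 : QC w c1) (hU : ∀ u ∈ U, QC w u) (hr : QC w r) (hd : QC w d1)
    (hZ : ∀ z ∈ Z, QC w z) :
    ∀ s ∈ monSpan c1 r d1 w U Z, w * s ∈ monSpan c1 r d1 w U Z := by
  refine monSpan_closed _ fun a u hu e b z hz k => ?_
  obtain ⟨s, -, hs⟩ := ((((h1.pow a).mul (hU u hu)).mul (hr.pow (e : ℕ))).mul (hd.pow b)).mul (hZ z hz)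
  rw [← mul_assoc, hs]
  have := monSpan_mem (c1 := c1) (r := r) (d1 := d1) (w := w) a hu e b hz (k + 1)
  rw [smul_mul_assoc]
  refine Submodule.smul_mem _ _ ?_
  rw [pow_succ'] at this
  simpa only [mul_assoc] using this

theorem closed_rd (k1 k2 k3 k4 k5 k6 k7 k8 k9 k10 k11 : ℂ)
    (hc : c2 * c1 = c1 * c2) (hU : ∀ u ∈ U, c2 * u ∈ U) (h1U : 1 ∈ U)
    (hUU : ∀ u ∈ U, ∀ s ∈ monSpan c1 r d1 w U Z, u * s ∈ monSpan c1 r d1 w U Z)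
    (rU : ∀ u ∈ U, QC r u) (dU : ∀ u ∈ U, QC d1 u)
    (cd2 : ∀ s ∈ monSpan c1 r d1 w U Z, d2 * s ∈ monSpan c1 r d1 w U Z)
    (cw : ∀ s ∈ monSpan c1 r d1 w U Z, w * s ∈ monSpan c1 r d1 w U Z)
    (hd1c1 : d1 * c1 = k1 • (c1 * d1) + k2 • r)
    (hrc1 : r * c1 = k3 • (c1 * r) + k4 • (c2 * d1))
    (hd1r : d1 * r = k5 • (r * d1) + k6 • (c1 * d2))
    (hrr : r * r = k7 • w + k8 • (c2 * d2) - k9 • (c2 * d1 * d1) - k10 • (c1 * c1 * d2)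
      + k11 • (c1 * r * d1)) :
    (∀ s ∈ monSpan c1 r d1 w U Z, r * s ∈ monSpan c1 r d1 w U Z) ∧
    (∀ s ∈ monSpan c1 r d1 w U Z, d1 * s ∈ monSpan c1 r d1 w U Z) := by
  have cc1 := closed_c1 (c1 := c1) (r := r) (d1 := d1) (w := w) (U := U) (Z := Z)
  have cc2 := closed_c2 (r := r) (d1 := d1) (w := w) (Z := Z) hc hU
  have base : ∀ (b : ℕ), ∀ z ∈ Z, ∀ k : ℕ, d1 ^ b * z * w ^ k ∈ monSpan c1 r d1 w U Z := by
    intro b z hz k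
    simpa using monSpan_mem (c1 := c1) (r := r) (d1 := d1) (w := w) 0 h1U 0 b hz k
  have base1 : ∀ (b : ℕ), ∀ z ∈ Z, ∀ k : ℕ, r * (d1 ^ b * z * w ^ k) ∈ monSpan c1 r d1 w U Z := by
    intro b z hz k
    simpa [mul_assoc] using monSpan_mem (c1 := c1) (r := r) (d1 := d1) (w := w) 0 h1U 1 b hz k
  have based : ∀ (b : ℕ) (z : B) (k : ℕ), d1 * (d1 ^ b * z * w ^ k) = d1 ^ (b + 1) * z * w ^ k := by
    intro b z k; rw [pow_succ']; simp only [mul_assoc]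
  have key : ∀ (a : ℕ), ∀ u ∈ U, ∀ (e : Fin 2) (b : ℕ), ∀ z ∈ Z, ∀ (k : ℕ),
      r * (c1 ^ a * u * r ^ (e : ℕ) * d1 ^ b * z * w ^ k) ∈ monSpan c1 r d1 w U Z ∧
      d1 * (c1 ^ a * u * r ^ (e : ℕ) * d1 ^ b * z * w ^ k) ∈ monSpan c1 r d1 w U Z := by
    intro a u hu e b z hz k
    have em : ∀ a : ℕ, c1 ^ a * u * r ^ (e : ℕ) * d1 ^ b * z * w ^ k =
      c1 ^ a * (u * (r ^ (e : ℕ) * (d1 ^ b * z * w ^ k))) := fun a => by simp only [mul_assoc]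
    rw [em]
    induction a with
    | zero =>
      have rec0 : r * (r ^ (e : ℕ) * (d1 ^ b * z * w ^ k)) ∈ monSpan c1 r d1 w U Z ∧
          d1 * (r ^ (e : ℕ) * (d1 ^ b * z * w ^ k)) ∈ monSpan c1 r d1 w U Z := by
        fin_cases e
        · simp only [Fin.zero_eta, Fin.val_zero, pow_zero, one_mul]
          exact ⟨base1 b z hz k, by rw [based]; exact base _ z hz k⟩
        · simp only [Fin.mk_one, Fin.val_one, pow_one]
          have hm := base b z hz k
          have hm1 : d1 * (d1 ^ b * z * w ^ k) ∈ monSpan c1 r d1 w U Z := by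
            rw [based]; exact base _ z hz k
          have hm2 : d1 * (d1 * (d1 ^ b * z * w ^ k)) ∈ monSpan c1 r d1 w U Z := by
            rw [based, based]; exact base _ z hz k
          have hm3 : r * (d1 * (d1 ^ b * z * w ^ k)) ∈ monSpan c1 r d1 w U Z := by
            rw [based]; exact base1 _ z hz k
          generalize d1 ^ b * z * w ^ k = m at *
          constructor
          · rw [← mul_assoc, hrr]
            simp only [add_mul, sub_mul, smul_mul_assoc, mul_assoc]
            refine add_mem (sub_mem (sub_mem (add_mem ?_ ?_) ?_) ?_) ?_ <;>
              refine Submodule.smul_mem _ _ ?_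
            · exact cw _ hm
            · exact cc2 _ (cd2 _ hm)
            · exact cc2 _ hm2
            · exact cc1 _ (cc1 _ (cd2 _ hm))
            · exact cc1 _ hm3
          · rw [← mul_assoc, hd1r]
            simp only [add_mul, smul_mul_assoc, mul_assoc]
            refine add_mem ?_ ?_ <;> refine Submodule.smul_mem _ _ ?_
            · exact hm3
            · exact cc1 _ (cd2 _ hm)
      generalize r ^ (e : ℕ) * (d1 ^ b * z * w ^ k) = m at *
      rw [pow_zero, one_mul, ← mul_assoc, ← mul_assoc]
      obtain ⟨s, -, hs⟩ := rU u hu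
      obtain ⟨t, -, ht⟩ := dU u hu
      rw [hs, ht, smul_mul_assoc, smul_mul_assoc, mul_assoc, mul_assoc]
      exact ⟨Submodule.smul_mem _ _ (hUU u hu _ rec0.1), Submodule.smul_mem _ _ (hUU u hu _ rec0.2)⟩
    | succ a ih =>
      rw [pow_succ', mul_assoc]
      generalize c1 ^ a * (u * (r ^ (e : ℕ) * (d1 ^ b * z * w ^ k))) = m at *
      rw [← mul_assoc, ← mul_assoc, hrc1, hd1c1]
      simp only [add_mul, smul_mul_assoc, mul_assoc]
      exact ⟨add_mem (Submodule.smul_mem _ _ (cc1 _ ih.1)) (Submodule.smul_mem _ _ (cc2 _ ih.2)),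
        add_mem (Submodule.smul_mem _ _ (cc1 _ ih.2)) (Submodule.smul_mem _ _ ih.1)⟩
  exact ⟨monSpan_closed _ fun a u hu e b z hz k => (key a u hu e b z hz k).1,
    monSpan_closed _ fun a u hu e b z hz k => (key a u hu e b z hz k).2⟩
end

theorem mk_rel {q : ℂ} {x y : FB} (h : BRel q x y) :
    RingQuot.mkAlgHom ℂ (BRel q) x = RingQuot.mkAlgHom ℂ (BRel q) y := RingQuot.mkAlgHom_rel ℂ h

theorem QC.of_eq {B : Type*} [Ring B] [Algebra ℂ B] {x y : B} {s : ℂ} (hs : s ≠ 0)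
    (h : x * y = s • (y * x)) : QC x y := ⟨s, hs, h⟩

theorem stmt17 (q : ℂ) (hq : q ≠ 0) :
    (LinearIndependent ℂ (pbwB q) ∧
      Submodule.span ℂ (Set.range (pbwB q)) = ⊤) ∧
    (LinearIndependent ℂ (pbwBplus q) ∧
      Submodule.span ℂ (Set.range (pbwBplus q))
        = Subalgebra.toSubmodule
            (Algebra.adjoin ℂ {bc1 q, bc2 q, bd1 q, bd2 q, br q, bw q})) := by
  have hli := pbw_li q hq
  have hp : ∀ n, q⁻¹ ^ n ≠ 0 := fun n => pow_ne_zero n (inv_ne_zero hq)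
  have hp' : ∀ n, q ^ n ≠ 0 := fun n => pow_ne_zero n hq
  have r1 : bc2 q * bc2i q = 1 := by simpa only [map_mul, map_one, bc1, bc2, bc2i, bd1, bd2, bd2i, br, bw] using mk_rel (BRel.c2c2i (q := q))
  have r2 : bc2i q * bc2 q = 1 := by simpa only [map_mul, map_one, bc1, bc2, bc2i, bd1, bd2, bd2i, br, bw] using mk_rel (BRel.c2ic2 (q := q))
  have r3 : bd2 q * bd2i q = 1 := by simpa only [map_mul, map_one, bc1, bc2, bc2i, bd1, bd2, bd2i, br, bw] using mk_rel (BRel.d2d2i (q := q))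
  have r4 : bd2i q * bd2 q = 1 := by simpa only [map_mul, map_one, bc1, bc2, bc2i, bd1, bd2, bd2i, br, bw] using mk_rel (BRel.d2id2 (q := q))
  have c2c1 : bc2 q * bc1 q = bc1 q * bc2 q := by
    simpa only [map_mul, map_smul, map_add, map_sub, bc1, bc2, bc2i, bd1, bd2, bd2i, br, bw] using mk_rel (BRel.c2c1 (q := q))
  have d2d1 : bd2 q * bd1 q = bd1 q * bd2 q := by
    simpa only [map_mul, map_smul, map_add, map_sub, bc1, bc2, bc2i, bd1, bd2, bd2i, br, bw] using mk_rel (BRel.d2d1 (q := q))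
  have d2c2 : QC (bd2 q) (bc2 q) := .of_eq (hp 4) (by
    simpa only [map_mul, map_smul, map_add, map_sub, bc1, bc2, bc2i, bd1, bd2, bd2i, br, bw] using mk_rel (BRel.d2c2 (q := q)))
  have d2c1 : QC (bd2 q) (bc1 q) := .of_eq (hp 2) (by
    simpa only [map_mul, map_smul, map_add, map_sub, bc1, bc2, bc2i, bd1, bd2, bd2i, br, bw] using mk_rel (BRel.d2c1 (q := q)))
  have d1c2 : QC (bd1 q) (bc2 q) := .of_eq (hp 2) (by
    simpa only [map_mul, map_smul, map_add, map_sub, bc1, bc2, bc2i, bd1, bd2, bd2i, br, bw] using mk_rel (BRel.d1c2 (q := q)))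
  have d2r : QC (bd2 q) (br q) := .of_eq (hp 2) (by
    simpa only [map_mul, map_smul, map_add, map_sub, bc1, bc2, bc2i, bd1, bd2, bd2i, br, bw] using mk_rel (BRel.d2r (q := q)))
  have rc2 : QC (br q) (bc2 q) := .of_eq (hp 2) (by
    simpa only [map_mul, map_smul, map_add, map_sub, bc1, bc2, bc2i, bd1, bd2, bd2i, br, bw] using mk_rel (BRel.rc2 (q := q)))
  have wr : QC (bw q) (br q) := .of_comm (by
    simpa only [map_mul, map_smul, map_add, map_sub, bc1, bc2, bc2i, bd1, bd2, bd2i, br, bw] using mk_rel (BRel.wr (q := q)))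
  have wc1 : QC (bw q) (bc1 q) := .of_eq (hp 2) (by
    simpa only [map_mul, map_smul, map_add, map_sub, bc1, bc2, bc2i, bd1, bd2, bd2i, br, bw] using mk_rel (BRel.wc1 (q := q)))
  have wc2 : QC (bw q) (bc2 q) := .of_eq (hp 4) (by
    simpa only [map_mul, map_smul, map_add, map_sub, bc1, bc2, bc2i, bd1, bd2, bd2i, br, bw] using mk_rel (BRel.wc2 (q := q)))
  have wd1 : QC (bw q) (bd1 q) := .of_eq (hp' 2) (by
    simpa only [map_mul, map_smul, map_add, map_sub, bc1, bc2, bc2i, bd1, bd2, bd2i, br, bw] using mk_rel (BRel.wd1 (q := q)))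
  have wd2 : QC (bw q) (bd2 q) := .of_eq (hp' 4) (by
    simpa only [map_mul, map_smul, map_add, map_sub, bc1, bc2, bc2i, bd1, bd2, bd2i, br, bw] using mk_rel (BRel.wd2 (q := q)))
  have d1c1 : bd1 q * bc1 q = (1 : ℂ) • (bc1 q * bd1 q) + (q⁻¹ ^ 2 - 1) • br q := by
    rw [one_smul]
    simpa only [map_mul, map_smul, map_add, map_sub, bc1, bc2, bc2i, bd1, bd2, bd2i, br, bw] using mk_rel (BRel.d1c1 (q := q))
  have rc1 : br q * bc1 q = (q⁻¹ ^ 2) • (bc1 q * br q)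
      + ((1 - q⁻¹ ^ 2) * q⁻¹ ^ 2) • (bc2 q * bd1 q) := by
    simpa only [map_mul, map_smul, map_add, map_sub, bc1, bc2, bc2i, bd1, bd2, bd2i, br, bw] using mk_rel (BRel.rc1 (q := q))
  have d1r : bd1 q * br q = (q⁻¹ ^ 2) • (br q * bd1 q)
      + ((1 - q⁻¹ ^ 2) * q⁻¹ ^ 2) • (bc1 q * bd2 q) := by
    simpa only [map_mul, map_smul, map_add, map_sub, bc1, bc2, bc2i, bd1, bd2, bd2i, br, bw] using mk_rel (BRel.d1r (q := q))
  have rr : br q * br q = (q⁻¹ ^ 4) • bw q + (q⁻¹ ^ 4 + q⁻¹ ^ 6) • (bc2 q * bd2 q)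
        - (q⁻¹ ^ 4) • (bc2 q * bd1 q * bd1 q)
        - (q⁻¹ ^ 4) • (bc1 q * bc1 q * bd2 q)
        + (q⁻¹ ^ 2) • (bc1 q * br q * bd1 q) := by
    simpa only [map_mul, map_smul, map_add, map_sub, bc1, bc2, bc2i, bd1, bd2, bd2i, br, bw] using mk_rel (BRel.rr (q := q))
  refine ⟨⟨hli, ?_⟩, ?_, ?_⟩
  · -- the whole algebra
    let U : Set (AlgB q) := Set.range (zp (bc2 q) (bc2i q))
    let Z : Set (AlgB q) := Set.range (zp (bd2 q) (bd2i q))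
    have hS : monSpan (bc1 q) (br q) (bd1 q) (bw q) U Z ≤ Submodule.span ℂ (Set.range (pbwB q)) := by
      refine Submodule.span_mono ?_
      rintro _ ⟨a, _, ⟨m, rfl⟩, e, b, _, ⟨n, rfl⟩, k, rfl⟩
      exact ⟨(a, m, e, b, n, k), rfl⟩
    have hU : ∀ u ∈ U, bc2 q * u ∈ U := by
      rintro _ ⟨m, rfl⟩; exact ⟨m + 1, (zp_mul_left r1 m).symm⟩
    have hUi : ∀ u ∈ U, bc2i q * u ∈ U := by
      rintro _ ⟨m, rfl⟩; exact ⟨m - 1, (zpi_mul_left r1 r2 m).symm⟩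
    have hZ : ∀ u ∈ Z, bd2 q * u ∈ Z := by
      rintro _ ⟨m, rfl⟩; exact ⟨m + 1, (zp_mul_left r3 m).symm⟩
    have hZi : ∀ u ∈ Z, bd2i q * u ∈ Z := by
      rintro _ ⟨m, rfl⟩; exact ⟨m - 1, (zpi_mul_left r3 r4 m).symm⟩
    have h1U : (1 : AlgB q) ∈ U := ⟨0, pow_zero _⟩
    have h1Z : (1 : AlgB q) ∈ Z := ⟨0, pow_zero _⟩
    have QU : ∀ x : AlgB q, QC x (bc2 q) → ∀ u ∈ U, QC x u := by
      rintro x h _ ⟨m, rfl⟩; exact h.zp r1 r2 m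
    have QZ : ∀ x : AlgB q, QC x (bd2 q) → ∀ u ∈ Z, QC x u := by
      rintro x h _ ⟨m, rfl⟩; exact h.zp r3 r4 m
    have cc1 := closed_c1 (c1 := bc1 q) (r := br q) (d1 := bd1 q) (w := bw q) (U := U) (Z := Z)
    have cc2 := closed_c2 (r := br q) (d1 := bd1 q) (w := bw q) (Z := Z) c2c1 hU
    have cc2i := closed_c2 (r := br q) (d1 := bd1 q) (w := bw q) (Z := Z)
      (comm_inv c2c1.symm r1 r2).symm hUi
    have cd2 := closed_d2 (w := bw q) d2c1 (QU _ d2c2) d2r (.of_comm d2d1) hZ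
    have cd2i := closed_d2 (w := bw q) (d2c1.symm.inv r3 r4).symm
      (QU _ (d2c2.symm.inv r3 r4).symm) (d2r.symm.inv r3 r4).symm
      ((QC.of_comm d2d1).symm.inv r3 r4).symm hZi
    have cw := closed_w wc1 (QU _ wc2) wr wd1 (QZ _ wd2)
    have hUU : ∀ u ∈ U, ∀ s ∈ monSpan (bc1 q) (br q) (bd1 q) (bw q) U Z,
        u * s ∈ monSpan (bc1 q) (br q) (bd1 q) (bw q) U Z := by
      rintro _ ⟨m, rfl⟩
      refine closed_c2 (comm_zp c2c1.symm r1 r2 m).symm ?_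
      rintro _ ⟨n, rfl⟩
      cases m with
      | ofNat m =>
        change bc2 q ^ m * _ ∈ U
        induction m with
        | zero => exact ⟨n, by simp⟩
        | succ m ih => rw [pow_succ', mul_assoc]; exact hU _ ih
      | negSucc m =>
        change bc2i q ^ (m + 1) * _ ∈ U
        generalize m + 1 = m
        induction m with
        | zero => exact ⟨n, by simp⟩
        | succ m ih => rw [pow_succ', mul_assoc]; exact hUi _ ih
    obtain ⟨cr, cd1⟩ := closed_rd _ _ _ _ _ _ _ _ _ _ _ c2c1 hU h1U hUU (QU _ rc2) (QU _ d1c2)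
      cd2 cw d1c1 rc1 d1r rr
    have h1 : (1 : AlgB q) ∈ monSpan (bc1 q) (br q) (bd1 q) (bw q) U Z := by
      simpa using monSpan_mem (c1 := bc1 q) (r := br q) (d1 := bd1 q) (w := bw q) 0 h1U 0 0 h1Z 0
    have hadj := adj_le (Set.range fun g : BGen => RingQuot.mkAlgHom ℂ (BRel q) (gB g)) _ h1 (by
      rintro _ ⟨g, rfl⟩
      cases g
      exacts [cc1, cc2, cc2i, cd1, cd2, cd2i, cr, cw])
    have htop : Algebra.adjoin ℂ (Set.range fun g : BGen => RingQuot.mkAlgHom ℂ (BRel q) (gB g)) = ⊤ := by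
      have h2 := congrArg (Subalgebra.map (RingQuot.mkAlgHom ℂ (BRel q)))
        (FreeAlgebra.adjoin_range_ι (R := ℂ) (X := BGen))
      rw [AlgHom.map_adjoin, Algebra.map_top, ← Set.range_comp,
        (AlgHom.range_eq_top _).2 (RingQuot.mkAlgHom_surjective ℂ (BRel q))] at h2
      exact h2
    rw [htop, Algebra.top_toSubmodule] at hadj
    exact top_le_iff.1 (hadj.trans hS)
  · -- independence in the subalgebra
    have : pbwBplus q = pbwB q ∘ fun x => (x.1, (x.2.1 : ℤ), x.2.2.1, x.2.2.2.1,
        (x.2.2.2.2.1 : ℤ), x.2.2.2.2.2) := rfl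
    rw [this]
    refine hli.comp _ ?_
    rintro ⟨a, b, e, m, n, k⟩ ⟨a', b', e', m', n', k'⟩ h
    simpa using h
  · refine le_antisymm ?_ ?_
    · rw [Submodule.span_le]
      rintro _ ⟨x, rfl⟩
      have hg : ∀ g ∈ ({bc1 q, bc2 q, bd1 q, bd2 q, br q, bw q} : Set (AlgB q)),
          g ∈ Algebra.adjoin ℂ {bc1 q, bc2 q, bd1 q, bd2 q, br q, bw q} :=
        fun g hg => Algebra.subset_adjoin hg
      rw [SetLike.mem_coe, Subalgebra.mem_toSubmodule]
      refine mul_mem (mul_mem (mul_mem (mul_mem (mul_mem ?_ ?_) ?_) ?_) ?_) ?_ <;>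
        exact pow_mem (hg _ (by simp)) _
    · let U : Set (AlgB q) := Set.range fun n : ℕ => bc2 q ^ n
      let Z : Set (AlgB q) := Set.range fun n : ℕ => bd2 q ^ n
      have hS : monSpan (bc1 q) (br q) (bd1 q) (bw q) U Z ≤
          Submodule.span ℂ (Set.range (pbwBplus q)) := by
        refine Submodule.span_mono ?_
        rintro _ ⟨a, _, ⟨m, rfl⟩, e, b, _, ⟨n, rfl⟩, k, rfl⟩
        exact ⟨(a, m, e, b, n, k), rfl⟩
      have hU : ∀ u ∈ U, bc2 q * u ∈ U := by
        rintro _ ⟨m, rfl⟩; exact ⟨m + 1, pow_succ' _ _⟩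
      have hZ : ∀ u ∈ Z, bd2 q * u ∈ Z := by
        rintro _ ⟨m, rfl⟩; exact ⟨m + 1, pow_succ' _ _⟩
      have h1U : (1 : AlgB q) ∈ U := ⟨0, pow_zero _⟩
      have h1Z : (1 : AlgB q) ∈ Z := ⟨0, pow_zero _⟩
      have QU : ∀ x : AlgB q, QC x (bc2 q) → ∀ u ∈ U, QC x u := by
        rintro x h _ ⟨m, rfl⟩; exact h.pow m
      have QZ : ∀ x : AlgB q, QC x (bd2 q) → ∀ u ∈ Z, QC x u := by
        rintro x h _ ⟨m, rfl⟩; exact h.pow m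
      have cc1 := closed_c1 (c1 := bc1 q) (r := br q) (d1 := bd1 q) (w := bw q) (U := U) (Z := Z)
      have cc2 := closed_c2 (r := br q) (d1 := bd1 q) (w := bw q) (Z := Z) c2c1 hU
      have cd2 := closed_d2 (w := bw q) d2c1 (QU _ d2c2) d2r (.of_comm d2d1) hZ
      have cw := closed_w wc1 (QU _ wc2) wr wd1 (QZ _ wd2)
      have hUU : ∀ u ∈ U, ∀ s ∈ monSpan (bc1 q) (br q) (bd1 q) (bw q) U Z,
          u * s ∈ monSpan (bc1 q) (br q) (bd1 q) (bw q) U Z := by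
        rintro _ ⟨m, rfl⟩
        refine closed_c2 (Commute.pow_left (show Commute (bc2 q) (bc1 q) from c2c1) m) ?_
        rintro _ ⟨n, rfl⟩
        exact ⟨m + n, pow_add _ _ _⟩
      obtain ⟨cr, cd1⟩ := closed_rd _ _ _ _ _ _ _ _ _ _ _ c2c1 hU h1U hUU (QU _ rc2) (QU _ d1c2)
        cd2 cw d1c1 rc1 d1r rr
      have h1 : (1 : AlgB q) ∈ monSpan (bc1 q) (br q) (bd1 q) (bw q) U Z := by
        simpa using monSpan_mem (c1 := bc1 q) (r := br q) (d1 := bd1 q) (w := bw q) 0 h1U 0 0 h1Z 0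
      refine (adj_le _ _ h1 ?_).trans hS
      rintro g (rfl | rfl | rfl | rfl | rfl | rfl)
      exacts [cc1, cc2, cd1, cd2, cr, cw]
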